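/- arXiv:1710.00793 — 4 statements merged into one kernel-verified Lean document; each statement's English description precedes it below -/
import Mathlib

section
/- Let Q be a quadratic form on 𝔽₂ⁿ whose radical R = rad(𝔽₂ⁿ) is nontrivial, and suppose Q has trivial kernel on R (i.e. Q(v) ≠ 0 for every nonzero v ∈ R). Fix a decomposition 𝔽₂ⁿ = V ⊕ R with B nondegenerate on V and let p_R : 𝔽₂ⁿ → R be the corresponding projection. Then for every totally singular subspace W of 𝔽₂ⁿ there exists a totally singular subspace W′ with |W′| = |W| such that W ∩ W′ ⊆ span{u} for some u ∈ 𝔽₂ⁿ with p_R(u) ≠ 0. -/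
/-!
A totally singular `W` contains no nonzero radical vector, so `B` embeds it into the dual of the
whole space; as `W` is finite-dimensional, `v ↦ B(v, ·)` then maps onto `W*`. Let `s` be a linear
section. The quadratic form `Q ∘ s` on `W*` is `f ↦ β(f, f)` for some bilinear form `β` (also in
characteristic two), and `β(f, g) = g (b f)` for a linear map `b : W* → W`. The corrected section
`t = s - b` takes singular values:
`Q (s f - b f) = Q (s f) + Q (b f) - B(s f, b f) = β(f, f) + 0 - f (b f) = 0`.
Its image is isomorphic to `W*`, hence to `W`, and meets `W` trivially: `B(t f, ·)` restricts to
`f` on `W`, and vanishes there if `t f ∈ W`. Thus any `u` with `p_R(u) ≠ 0` will do.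
-/

noncomputable section

/-- The radical of the bilinear form associated to a quadratic form `Q` on `𝔽₂ⁿ`:
`rad(𝔽₂ⁿ) = {v | B(v,w) = 0 for all w}` where `B(u,v) = Q(u+v) + Q(u) + Q(v)`. -/
def radical {n : ℕ} (Q : QuadraticForm (ZMod 2) (Fin n → ZMod 2)) :
    Submodule (ZMod 2) (Fin n → ZMod 2) :=
  LinearMap.ker (QuadraticMap.polarBilin Q)

/-- The orthogonal set `T^⊥ = {v | B(v,t) = 0 for all t ∈ T}` of a subset `T ⊆ 𝔽₂ⁿ`. -/
def perpSet {n : ℕ} (Q : QuadraticForm (ZMod 2) (Fin n → ZMod 2))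
    (T : Set (Fin n → ZMod 2)) : Set (Fin n → ZMod 2) :=
  {v | ∀ t ∈ T, QuadraticMap.polarBilin Q v t = 0}

lemma exists_projectionOnto_ne_zero {R M : Type*} [Ring R] [AddCommGroup M] [Module R M]
    {p q : Submodule R M} (hp : p ≠ ⊥) (hpq : IsCompl p q) :
    ∃ u, p.projectionOnto q hpq u ≠ 0 := by
  obtain ⟨x, hx, hx0⟩ := p.exists_mem_ne_zero_of_ne_bot hp
  exact ⟨x, fun h => hx0 (congrArg Subtype.val
    ((Submodule.projectionOnto_apply_left hpq ⟨x, hx⟩).symm.trans h))⟩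

lemma exists_linearMap_apply_self_eq_quadraticForm {R P : Type*} [CommRing R] [AddCommGroup P]
    [Module R P] [Module.IsReflexive R P] [Module.Free R (Module.Dual R P)]
    (q : QuadraticForm R (Module.Dual R P)) :
    ∃ b : Module.Dual R P →ₗ[R] P, ∀ f, f (b f) = q f := by
  obtain ⟨β, rfl⟩ := LinearMap.BilinMap.toQuadraticMap_surjective q
  exact ⟨(Module.evalEquiv R P).symm ∘ₗ β,
    fun f => Module.apply_evalEquiv_symm_apply R P f (β f)⟩

section QuadraticMap

variable {R M N : Type*} [CommRing R] [AddCommGroup M] [AddCommGroup N] [Module R M] [Module R N]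
  {Q : QuadraticMap R M N} {W : Submodule R M}

lemma polar_eq_zero_of_totallySingular (hW : ∀ v ∈ W, Q v = 0) {x y : M} (hx : x ∈ W)
    (hy : y ∈ W) : QuadraticMap.polar Q x y = 0 := by
  rw [QuadraticMap.polar, hW _ (W.add_mem hx hy), hW x hx, hW y hy, sub_zero, sub_zero]

/-- Mathlib's `Q.radical` consists of the singular vectors of the kernel of `B`, whereas `radical Q`
is the whole kernel. -/
lemma disjoint_ker_polarBilin_of_disjoint_radical (hW : ∀ v ∈ W, Q v = 0)
    (hdisj : Disjoint W Q.radical) : Disjoint W Q.polarBilin.ker :=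
  Submodule.disjoint_def.2 fun v hv hker =>
    Submodule.disjoint_def.1 hdisj v hv ⟨hW v hv, hker⟩

lemma radical_eq_bot_of_ne_zero_on_ker_polarBilin
    (hker : ∀ v ∈ Q.polarBilin.ker, v ≠ 0 → Q v ≠ 0) : Q.radical = ⊥ :=
  (Submodule.eq_bot_iff _).2 fun v hv => by_contra fun hv0 => hker v hv.2 hv0 hv.1

end QuadraticMap

section QuadraticForm

variable {R M : Type*} [CommRing R] [AddCommGroup M] [Module R M]
  {Q : QuadraticForm R M} {W : Submodule R M}

lemma exists_section_polar_eq_apply [Module.Projective R (Module.Dual R W)]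
    (hsurj : Function.Surjective (Q.polarBilin.domRestrict W).flip) :
    ∃ s : Module.Dual R W →ₗ[R] M, ∀ f (w : W), QuadraticMap.polar Q (s f) w = f w := by
  obtain ⟨s, hs⟩ := Module.projective_lifting_property _ LinearMap.id hsurj
  refine ⟨s, fun f w => ?_⟩
  rw [QuadraticMap.polar_comm]
  exact LinearMap.congr_fun (LinearMap.congr_fun hs f) w

lemma exists_totallySingular_section [Module.IsReflexive R W]
    [Module.Free R (Module.Dual R W)] (hW : ∀ v ∈ W, Q v = 0)
    (hsurj : Function.Surjective (Q.polarBilin.domRestrict W).flip) :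
    ∃ t : Module.Dual R W →ₗ[R] M,
      (∀ f, Q (t f) = 0) ∧ ∀ f (w : W), QuadraticMap.polar Q (t f) w = f w := by
  obtain ⟨s, hs⟩ := exists_section_polar_eq_apply hsurj
  obtain ⟨b, hb⟩ := exists_linearMap_apply_self_eq_quadraticForm (Q.comp s)
  refine ⟨s - W.subtype ∘ₗ b, fun f => ?_, fun f w => ?_⟩
  · calc
      Q (s f - b f) = Q (s f) + Q (b f) - QuadraticMap.polar Q (s f) (b f) := by
        rw [sub_eq_add_neg, QuadraticMap.map_add Q, QuadraticMap.map_neg,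
          QuadraticMap.polar_neg_right, ← sub_eq_add_neg]
      _ = Q (s f) + 0 - Q (s f) := by rw [hW _ (b f).2, hs, hb, QuadraticMap.comp_apply]
      _ = 0 := by rw [add_zero, sub_self]
  · calc
      QuadraticMap.polar Q (s f - b f) w
          = QuadraticMap.polar Q (s f) w - QuadraticMap.polar Q (b f) w :=
        QuadraticMap.polar_sub_left Q _ _ _
      _ = f w := by rw [hs, polar_eq_zero_of_totallySingular hW (b f).2 w.2, sub_zero]

lemma injective_of_polar_eq_apply {t : Module.Dual R W →ₗ[R] M}
    (ht : ∀ f (w : W), QuadraticMap.polar Q (t f) w = f w) : Function.Injective t :=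
  fun f g hfg => LinearMap.ext fun w => by rw [← ht, hfg, ht]

lemma disjoint_range_of_polar_eq_apply (hW : ∀ v ∈ W, Q v = 0) {t : Module.Dual R W →ₗ[R] M}
    (ht : ∀ f (w : W), QuadraticMap.polar Q (t f) w = f w) : Disjoint W t.range := by
  rw [Submodule.disjoint_def]
  rintro _ htf ⟨f, rfl⟩
  have hf : f = 0 := LinearMap.ext fun w =>
    (ht f w).symm.trans (polar_eq_zero_of_totallySingular hW htf w.2)
  rw [hf, map_zero]

end QuadraticForm

theorem exists_totallySingular_complement_general {K M : Type*} [Field K] [AddCommGroup M]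
    [Module K M] {Q : QuadraticForm K M} {W : Submodule K M} [FiniteDimensional K W]
    (hW : ∀ v ∈ W, Q v = 0) (hdisj : Disjoint W Q.radical) :
    ∃ W' : Submodule K M,
      (∀ v ∈ W', Q v = 0) ∧ Nonempty (W' ≃ₗ[K] W) ∧ Disjoint W W' := by
  have hinj : Function.Injective (Q.polarBilin.domRestrict W) :=
    LinearMap.injective_domRestrict_iff.2 (disjoint_ker_polarBilin_of_disjoint_radical hW hdisj)
  obtain ⟨t, hQt, ht⟩ :=
    exists_totallySingular_section hW (LinearMap.flip_surjective_iff₁.2 hinj)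
  have hrank : Module.finrank K t.range = Module.finrank K W :=
    (LinearMap.finrank_range_of_inj (injective_of_polar_eq_apply ht)).trans
      Subspace.dual_finrank_eq
  exact ⟨t.range, Set.forall_mem_range.2 hQt, ⟨LinearEquiv.ofFinrankEq _ _ hrank⟩,
    disjoint_range_of_polar_eq_apply hW ht⟩

/-- Let `Q` be a quadratic form on `𝔽₂ⁿ` with nontrivial radical `R` on which `Q` has trivial
kernel.  Fix a decomposition `𝔽₂ⁿ = V ⊕ R` with `B` nondegenerate on `V`.  Then for every
totally singular subspace `W` there is a totally singular subspace `W'` with `|W'| = |W|` and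
`W ∩ W' ⊆ span{u}` for some `u` with `p_R(u) ≠ 0`. -/
theorem exists_totallySingular_complement {n : ℕ}
    (Q : QuadraticForm (ZMod 2) (Fin n → ZMod 2))
    (hradne : radical Q ≠ ⊥)
    (hker : ∀ v ∈ radical Q, v ≠ 0 → Q v ≠ 0)
    (V : Submodule (ZMod 2) (Fin n → ZMod 2))
    (hcompl : IsCompl V (radical Q))
    (hnondeg : ∀ x ∈ V, (∀ y ∈ V, QuadraticMap.polarBilin Q x y = 0) → x = 0)
    (W : Submodule (ZMod 2) (Fin n → ZMod 2)) (hW : ∀ v ∈ W, Q v = 0) :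
    ∃ W' : Submodule (ZMod 2) (Fin n → ZMod 2), (∀ v ∈ W', Q v = 0) ∧
      Nat.card W' = Nat.card W ∧
      ∃ u : Fin n → ZMod 2,
        (radical Q).linearProjOfIsCompl V hcompl.symm u ≠ 0 ∧
        W ⊓ W' ≤ Submodule.span (ZMod 2) {u} := by
  obtain ⟨u, hu⟩ := exists_projectionOnto_ne_zero hradne hcompl.symm
  obtain ⟨W', hW', ⟨e⟩, hdisj⟩ := exists_totallySingular_complement_general hW
    (radical_eq_bot_of_ne_zero_on_ker_polarBilin hker ▸ disjoint_bot_right)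
  exact ⟨W', hW', Nat.card_congr e.toEquiv, u, hu, hdisj.le_bot.trans bot_le⟩

end
end

section
/- Let Q be a quadratic form on 𝔽₂ⁿ with trivial kernel on the radical, i.e. Q(v) ≠ 0 for every nonzero v ∈ rad(𝔽₂ⁿ). Let H ⊂ 𝔽₂ⁿ be a subspace of index 2, let S = (ker Q) ∖ H, and suppose S spans 𝔽₂ⁿ. Then for every subset T ⊆ S one has |T^⊥ ∩ T| ≤ |S| − |T|. -/
/-!
Put `X = T^⊥ ∩ T` and `U = span X`. Since `X` consists of pairwise orthogonal singular vectors,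
`U` is totally singular; moreover `X ⊆ U \ H` and `T ⊆ U^⊥`, so it suffices to find `|U \ H|`
elements of `S \ U^⊥`. As `S` spans and no nonzero singular vector lies in the radical, the
functionals `B(·, s)` on `U` with `s ∈ S \ U^⊥` separate the points of `U`.

If they all coincide, then `U` has at most one nonzero vector and the bound is clear. Otherwise
choose `s` and `t` with different functionals and put `K = U ∩ H`, so that `|U \ H| ≤ |K|`. For
`x ∈ K` one has `Q (s + x) = B(s, x)`, hence at least half of the coset `s + K` is singular and so
lies in `S \ U^⊥`. The same holds for `t + K`, and these two cosets are disjoint.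
-/

noncomputable section

section CommRing

open Cardinal QuadraticMap

variable {R V : Type*} [CommRing R] [AddCommGroup V] [Module R V] {Q : QuadraticForm R V}

/-- A submodule on which the quadratic form vanishes identically. -/
def IsTotallySingular (Q : QuadraticForm R V) (U : Submodule R V) : Prop :=
  ∀ u ∈ U, Q u = 0

/-- The set `S = (ker Q) ∖ H` of singular vectors lying outside `H`. -/
def singularOutside (Q : QuadraticForm R V) (H : Submodule R V) : Set V :=
  {v | Q v = 0} \ H

/-- The singular vectors in the coset `s + K`, membership in the coset being `v - s ∈ K`. -/
def singularCoset (Q : QuadraticForm R V) (K : Submodule R V) (s : V) : Set V :=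
  {v | v - s ∈ K ∧ Q v = 0}

theorem IsTotallySingular.mono {U K : Submodule R V} (hU : IsTotallySingular Q U) (hKU : K ≤ U) :
    IsTotallySingular Q K :=
  fun u hu ↦ hU u (hKU hu)

theorem IsTotallySingular.polar_eq_zero {U : Submodule R V} (hU : IsTotallySingular Q U) {u v : V}
    (hu : u ∈ U) (hv : v ∈ U) : polar Q u v = 0 := by
  rw [polar, hU _ (U.add_mem hu hv), hU u hu, hU v hv, sub_zero, sub_zero]

theorem IsTotallySingular.polar_eq_of_sub_mem {U : Submodule R V} (hU : IsTotallySingular Q U)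
    {u v s : V} (hu : u ∈ U) (hvs : v - s ∈ U) : polar Q u v = polar Q u s := by
  rw [← sub_eq_zero, ← polar_sub_right, hU.polar_eq_zero hu hvs]

theorem subset_orthogonalBilin_span {B : LinearMap.BilinForm R V} {X Y : Set V}
    (hXY : ∀ x ∈ X, ∀ y ∈ Y, B x y = 0) : Y ⊆ (Submodule.span R X).orthogonalBilin B := by
  intro y hy u hu
  have hle : Submodule.span R X ≤ LinearMap.ker (B.flip y) :=
    Submodule.span_le.2 fun x hx ↦ hXY x hx y hy
  exact hle hu

theorem isTotallySingular_span {X : Set V} (hX : ∀ x ∈ X, Q x = 0)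
    (hXX : ∀ x ∈ X, ∀ y ∈ X, Q.polarBilin x y = 0) :
    IsTotallySingular Q (Submodule.span R X) := by
  have hperp : Submodule.span R X ≤ (Submodule.span R X).orthogonalBilin Q.polarBilin :=
    Submodule.span_le.2 (subset_orthogonalBilin_span hXX)
  intro u hu
  induction hu using Submodule.span_induction with
  | mem x hx => exact hX x hx
  | zero => exact Q.map_zero
  | smul a x _ hQx => rw [Q.map_smul, hQx, smul_zero]
  | add x y hx hy hQx hQy =>
    have hxy : polar Q x y = 0 := hperp hy x hx
    rw [QuadraticMap.map_add Q, hQx, hQy, hxy, add_zero, add_zero]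

theorem exists_mem_apply_ne_zero_of_span_eq_top {N : Type*} [AddCommGroup N] [Module R N]
    {S : Set V} (hS : Submodule.span R S = ⊤) {f : V →ₗ[R] N} (hf : f ≠ 0) : ∃ s ∈ S, f s ≠ 0 := by
  contrapose! hf
  exact LinearMap.ext_on hS hf

theorem singularCoset_inf_subset {U H : Submodule R V} (hU : IsTotallySingular Q U) {s : V}
    (hsH : s ∉ H) (hsU : s ∉ U.orthogonalBilin Q.polarBilin) :
    singularCoset Q (U ⊓ H) s ⊆ singularOutside Q H \ U.orthogonalBilin Q.polarBilin := by
  rintro v ⟨⟨hvsU, hvsH⟩, hQv⟩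
  refine ⟨⟨hQv, fun hvH ↦ hsH ((H.sub_mem_iff_right hvH).1 hvsH)⟩, fun hvperp ↦ hsU ?_⟩
  exact fun u hu ↦ (hU.polar_eq_of_sub_mem hu hvsU).symm.trans (hvperp u hu)

theorem disjoint_singularCoset {U K : Submodule R V} (hU : IsTotallySingular Q U) (hKU : K ≤ U)
    {u s t : V} (hu : u ∈ U) (hst : polar Q u s ≠ polar Q u t) :
    Disjoint (singularCoset Q K s) (singularCoset Q K t) := by
  refine Set.disjoint_left.2 fun v hvs hvt ↦ hst ?_
  rw [← hU.polar_eq_of_sub_mem hu (hKU hvs.1), hU.polar_eq_of_sub_mem hu (hKU hvt.1)]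

theorem mk_ker_polarBilin_le_mk_singularCoset {K : Submodule R V} (hK : IsTotallySingular Q K)
    {s : V} (hs : Q s = 0) :
    #(LinearMap.ker ((Q.polarBilin s).domRestrict K)) ≤ #(singularCoset Q K s) := by
  have hmem (x : LinearMap.ker ((Q.polarBilin s).domRestrict K)) :
      s + (x : V) ∈ singularCoset Q K s := by
    have hsx : polar Q s x = 0 := x.2
    refine ⟨by simp, ?_⟩
    rw [QuadraticMap.map_add Q, hs, hK x x.1.2, hsx, add_zero, add_zero]
  refine mk_le_of_injective (f := fun x ↦ ⟨s + (x : V), hmem x⟩) fun x y hxy ↦ ?_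
  exact Subtype.ext (Subtype.ext (add_left_cancel (congrArg Subtype.val hxy)))

theorem mk_diff_le_mk_inf_of_card_quotient_eq_two {H : Submodule R V} (hH : Nat.card (V ⧸ H) = 2)
    (U : Submodule R V) : #((U : Set V) \ H : Set V) ≤ #(U ⊓ H : Submodule R V) := by
  obtain hempty | ⟨r, hrU, hrH⟩ := ((U : Set V) \ H).eq_empty_or_nonempty
  · simp [hempty]
  have hmem (v : ((U : Set V) \ H : Set V)) : (v : V) + r ∈ U ⊓ H :=
    ⟨U.add_mem v.2.1 hrU,
      (AddSubgroup.add_mem_iff_of_index_two (H := H.toAddSubgroup) hH).2 (iff_of_false v.2.2 hrH)⟩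
  refine mk_le_of_injective (f := fun v ↦ ⟨v + r, hmem v⟩) fun v w hvw ↦ ?_
  exact Subtype.ext (add_right_cancel (congrArg Subtype.val hvw))

end CommRing

section ZModTwo

open Cardinal QuadraticMap

variable {V : Type*} [AddCommGroup V] [Module (ZMod 2) V] {Q : QuadraticForm (ZMod 2) V}

theorem mk_le_two_mul_mk_ker (f : V →ₗ[ZMod 2] ZMod 2) : #V ≤ 2 * #(LinearMap.ker f) := by
  have hquot : #(V ⧸ f.toAddMonoidHom.ker) ≤ 2 := by
    simpa using lift_mk_le_lift_mk_of_injective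
      (QuotientAddGroup.kerLift_injective f.toAddMonoidHom)
  calc #V = #(V ⧸ f.toAddMonoidHom.ker) * #f.toAddMonoidHom.ker := by
        rw [mul_def]
        exact mk_congr AddSubgroup.addGroupEquivQuotientProdAddSubgroup
    _ ≤ 2 * #(LinearMap.ker f) := mul_le_mul_left hquot _

theorem mk_le_mk_ker_add_mk_ker (f g : V →ₗ[ZMod 2] ZMod 2) :
    #V ≤ #(LinearMap.ker f) + #(LinearMap.ker g) := by
  obtain hfg | hgf := le_total #(LinearMap.ker f) #(LinearMap.ker g)
  · exact (mk_le_two_mul_mk_ker f).trans (by rw [two_mul]; gcongr)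
  · exact (mk_le_two_mul_mk_ker g).trans (by rw [two_mul]; gcongr)

theorem mk_le_mk_singularCoset_add_mk_singularCoset {K : Submodule (ZMod 2) V}
    (hK : IsTotallySingular Q K) {s t : V} (hs : Q s = 0) (ht : Q t = 0) :
    #K ≤ #(singularCoset Q K s) + #(singularCoset Q K t) :=
  (mk_le_mk_ker_add_mk_ker _ _).trans <| add_le_add
    (mk_ker_polarBilin_le_mk_singularCoset hK hs) (mk_ker_polarBilin_le_mk_singularCoset hK ht)

theorem mk_inf_le_mk_singularOutside_diff {U H : Submodule (ZMod 2) V}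
    (hU : IsTotallySingular Q U) {u s t : V} (hu : u ∈ U)
    (hs : s ∈ singularOutside Q H \ U.orthogonalBilin Q.polarBilin)
    (ht : t ∈ singularOutside Q H \ U.orthogonalBilin Q.polarBilin)
    (hst : polar Q u s ≠ polar Q u t) :
    #(U ⊓ H : Submodule (ZMod 2) V) ≤
      #(singularOutside Q H \ U.orthogonalBilin Q.polarBilin : Set V) :=
  calc #(U ⊓ H : Submodule (ZMod 2) V)
      ≤ #(singularCoset Q (U ⊓ H) s) + #(singularCoset Q (U ⊓ H) t) :=
        mk_le_mk_singularCoset_add_mk_singularCoset (hU.mono inf_le_left) hs.1.1 ht.1.1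
    _ = #(singularCoset Q (U ⊓ H) s ∪ singularCoset Q (U ⊓ H) t : Set V) :=
        (mk_union_of_disjoint (disjoint_singularCoset hU inf_le_left hu hst)).symm
    _ ≤ #(singularOutside Q H \ U.orthogonalBilin Q.polarBilin : Set V) :=
        mk_le_mk_of_subset <|
          Set.union_subset (singularCoset_inf_subset hU hs.1.2 hs.2)
            (singularCoset_inf_subset hU ht.1.2 ht.2)

theorem eq_of_separating_of_apply_eq {B : LinearMap.BilinForm (ZMod 2) V}
    {U : Submodule (ZMod 2) V} {P : Set V} (hsep : ∀ u ∈ U, u ≠ 0 → ∃ s ∈ P, B u s ≠ 0)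
    (hconst : ∀ u ∈ U, ∀ s ∈ P, ∀ t ∈ P, B u s = B u t)
    {u v : V} (hu : u ∈ U) (hv : v ∈ U) (hu0 : u ≠ 0) (hv0 : v ≠ 0) : u = v := by
  by_contra huv
  obtain ⟨s, hsP, hus⟩ := hsep u hu hu0
  obtain ⟨t, htP, hvt⟩ := hsep v hv hv0
  obtain ⟨w, hwP, huvw⟩ := hsep (u - v) (U.sub_mem hu hv) (sub_ne_zero.2 huv)
  have huw : B u w = 1 := Fin.eq_one_of_ne_zero _ (hconst u hu s hsP w hwP ▸ hus)
  have hvw : B v w = 1 := Fin.eq_one_of_ne_zero _ (hconst v hv t htP w hwP ▸ hvt)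
  exact huvw (by rw [map_sub, LinearMap.sub_apply, huw, hvw, sub_self])

theorem IsTotallySingular.mk_diff_le {U H : Submodule (ZMod 2) V} (hU : IsTotallySingular Q U)
    (hrad : Q.radical = ⊥) (hH : Nat.card (V ⧸ H) = 2)
    (hspan : Submodule.span (ZMod 2) (singularOutside Q H) = ⊤) :
    #((U : Set V) \ H : Set V) ≤
      #(singularOutside Q H \ U.orthogonalBilin Q.polarBilin : Set V) := by
  set P : Set V := singularOutside Q H \ U.orthogonalBilin Q.polarBilin
  have hsep : ∀ u ∈ U, u ≠ 0 → ∃ s ∈ P, Q.polarBilin u s ≠ 0 := by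
    intro u hu hu0
    have hpolar : Q.polarBilin u ≠ 0 := fun h ↦
      hu0 ((Submodule.eq_bot_iff _).1 hrad u ⟨hU u hu, h⟩)
    obtain ⟨s, hs, hus⟩ := exists_mem_apply_ne_zero_of_span_eq_top hspan hpolar
    exact ⟨s, ⟨hs, fun hperp ↦ hus (hperp u hu)⟩, hus⟩
  by_cases hconst : ∀ u ∈ U, ∀ s ∈ P, ∀ t ∈ P, Q.polarBilin u s = Q.polarBilin u t
  · have hne {u : V} (huH : u ∉ H) : u ≠ 0 := fun h ↦ huH (h ▸ H.zero_mem)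
    obtain hempty | ⟨r, hrU, hrH⟩ := ((U : Set V) \ H).eq_empty_or_nonempty
    · simp [hempty]
    obtain ⟨s, hsP, -⟩ := hsep r hrU (hne hrH)
    calc #((U : Set V) \ H : Set V) ≤ 1 := mk_le_one_iff_set_subsingleton.2 fun u hu v hv ↦
          eq_of_separating_of_apply_eq hsep hconst hu.1 hv.1 (hne hu.2) (hne hv.2)
      _ ≤ #P := Cardinal.one_le_iff_ne_zero.2 (mk_ne_zero_iff.2 ⟨s, hsP⟩)
  · push Not at hconst
    obtain ⟨u, hu, s, hs, t, ht, hst⟩ := hconst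
    exact (mk_diff_le_mk_inf_of_card_quotient_eq_two hH U).trans
      (mk_inf_le_mk_singularOutside_diff hU hu hs ht hst)

theorem perp_inter_card_le_general (Q : QuadraticForm (ZMod 2) V)
    (hrad : Q.radical = ⊥) (H : Submodule (ZMod 2) V) (hH : Nat.card (V ⧸ H) = 2)
    (hspan : Submodule.span (ZMod 2) (singularOutside Q H) = ⊤)
    {T : Set V} (hT : T ⊆ singularOutside Q H) :
    #({v | ∀ t ∈ T, Q.polarBilin v t = 0} ∩ T : Set V) ≤ #(singularOutside Q H \ T : Set V) := by
  set X : Set V := {v | ∀ t ∈ T, Q.polarBilin v t = 0} ∩ T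
  set U : Submodule (ZMod 2) V := Submodule.span (ZMod 2) X
  have hU : IsTotallySingular Q U :=
    isTotallySingular_span (fun x hx ↦ (hT hx.2).1) fun x hx y hy ↦ hx.1 y hy.2
  have hXU : X ⊆ (U : Set V) \ H := fun x hx ↦ ⟨Submodule.subset_span hx, (hT hx.2).2⟩
  have hTU : T ⊆ U.orthogonalBilin Q.polarBilin :=
    subset_orthogonalBilin_span fun x hx ↦ hx.1
  calc #X ≤ #((U : Set V) \ H : Set V) := mk_le_mk_of_subset hXU
    _ ≤ #(singularOutside Q H \ U.orthogonalBilin Q.polarBilin : Set V) :=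
        hU.mk_diff_le hrad hH hspan
    _ ≤ #(singularOutside Q H \ T : Set V) := mk_le_mk_of_subset (Set.sdiff_subset_sdiff_right hTU)

end ZModTwo

/-- Let `Q` be a quadratic form on `𝔽₂ⁿ` with trivial kernel on the radical, `H` a subspace
of index 2, and `S = (ker Q) ∖ H` a spanning set.  Then for every subset `T ⊆ S` one has
`|T^⊥ ∩ T| ≤ |S| − |T|`. -/
theorem perp_inter_card_le {n : ℕ}
    (Q : QuadraticForm (ZMod 2) (Fin n → ZMod 2))
    (hker : ∀ v ∈ radical Q, v ≠ 0 → Q v ≠ 0)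
    (H : Submodule (ZMod 2) (Fin n → ZMod 2))
    (hH : Nat.card ((Fin n → ZMod 2) ⧸ H) = 2)
    (S : Set (Fin n → ZMod 2)) (hS : S = {v | Q v = 0} \ H)
    (hspan : Submodule.span (ZMod 2) S = ⊤)
    (T : Set (Fin n → ZMod 2)) (hT : T ⊆ S) :
    (perpSet Q T ∩ T).ncard ≤ S.ncard - T.ncard := by
  have hrad : Q.radical = ⊥ :=
    (Submodule.eq_bot_iff _).2 fun v hv ↦ by_contra fun hv0 ↦ hker v hv.2 hv0 hv.1
  subst hS
  rw [← Set.ncard_sdiff hT]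
  exact Cardinal.toNat_le_toNat (perp_inter_card_le_general Q hrad H hH hspan hT)
    (Set.toFinite _).lt_aleph0

end
end

section
/- Let Q be a quadratic form on 𝔽₂ⁿ, let H ⊂ 𝔽₂ⁿ be a subspace of index 2, let S = (ker Q) ∖ H, and suppose S spans 𝔽₂ⁿ. Then for every subset T ⊆ S satisfying T ∩ ker(Q|_{rad(𝔽₂ⁿ)}) = ∅ (i.e. T contains no element of the radical on which Q vanishes), one has |T^⊥ ∩ T| ≤ |S| − |T|. -/
/-!
Put `U = T^⊥ ∩ T`, a set of pairwise orthogonal singular vectors outside `H`. An element of `S`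
not orthogonal to all of `U` cannot lie in `T`, so it suffices to find `|U|` such elements.
If `s ∈ S` and `u, v ∈ U` satisfy `B(s,u) = B(s,v)`, then `s + u + v` is again in `S` and pairs
with `U` exactly as `s` does. Hence the class of elements of `S` pairing with `U` as `s` does is
at least as large as each of the two fibres of `B(s,·)` on `U`.

Every `u ∈ U` pairs nontrivially with some element of `S`, because `S` spans and `u` is not in the
radical. If some `s ∈ S` has `B(s,·) = 1` on all of `U`, then its class has at least `|U|`
elements. Otherwise two elements of `S` induce different nonzero functions on `U`; their classes
are disjoint and each has at least `|U| / 2` elements.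
-/

noncomputable section

section PairingClass

variable {R M : Type*} [CommRing R] [AddCommGroup M] [Module R M]

/-- A set `S` is closed under balanced sums for the bilinear form `B` if `s + (u + v) ∈ S` whenever
`s, u, v ∈ S`, the vectors `u` and `v` are orthogonal, and they pair equally with `s`. This is all
that the counting argument needs to know about singular vectors outside a subspace of index 2. -/
def IsBalancedSumClosed (B : LinearMap.BilinForm R M) (S : Set M) : Prop :=
  ∀ ⦃s u v⦄, s ∈ S → u ∈ S → v ∈ S → B u v = 0 → B s u = B s v → s + (u + v) ∈ S

/-- The pairing class of `s`: the elements of `S` inducing the same function on `U` as `s` through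
the bilinear form `B`. -/
def pairingClass (B : LinearMap.BilinForm R M) (S U : Set M) (s : M) : Set M :=
  {x ∈ S | ∀ u ∈ U, B x u = B s u}

theorem disjoint_pairingClass (B : LinearMap.BilinForm R M) (S : Set M) {U : Set M} {s t u : M}
    (hu : u ∈ U) (hst : B s u ≠ B t u) :
    Disjoint (pairingClass B S U s) (pairingClass B S U t) :=
  Set.disjoint_left.2 fun _ hxs hxt => hst ((hxs.2 u hu).symm.trans (hxt.2 u hu))

theorem pairingClass_subset_nonorthogonal (B : LinearMap.BilinForm R M) (S : Set M) {U : Set M}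
    {s u : M} (hu : u ∈ U) (hsu : B s u ≠ 0) :
    pairingClass B S U s ⊆ {x ∈ S | ∃ u ∈ U, B x u ≠ 0} :=
  fun _ hx => ⟨hx.1, u, hu, (hx.2 u hu).trans_ne hsu⟩

theorem encard_fiber_le_encard_pairingClass {B : LinearMap.BilinForm R M} {S U : Set M}
    (hS : IsBalancedSumClosed B S) (hUS : U ⊆ S) (hU : ∀ u ∈ U, ∀ v ∈ U, B u v = 0)
    {s : M} (hs : s ∈ S) (c : R) :
    {u ∈ U | B s u = c}.encard ≤ (pairingClass B S U s).encard := by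
  obtain hempty | ⟨v, hv, hsv⟩ := {u ∈ U | B s u = c}.eq_empty_or_nonempty
  · simp [hempty]
  refine Set.encard_le_encard_of_injOn (f := fun u => s + (u + v)) ?_ ?_
  · rintro u ⟨hu, hsu⟩
    refine ⟨hS hs (hUS hu) (hUS hv) (hU u hu v hv) (hsu.trans hsv.symm), fun w hw => ?_⟩
    simp [hU u hu w hw, hU v hv w hw]
  · exact ((add_right_injective s).comp (add_left_injective v)).injOn

end PairingClass

section BinaryForm

variable {V : Type*} [AddCommGroup V] [Module (ZMod 2) V] {B : LinearMap.BilinForm (ZMod 2) V}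
  {S U : Set V}

theorem encard_le_encard_pairingClass_add_self (hS : IsBalancedSumClosed B S) (hUS : U ⊆ S)
    (hU : ∀ u ∈ U, ∀ v ∈ U, B u v = 0) {s : V} (hs : s ∈ S) :
    U.encard ≤ (pairingClass B S U s).encard + (pairingClass B S U s).encard := by
  have zero_or_one : ∀ a : ZMod 2, a = 0 ∨ a = 1 := by decide
  have two_fibers : U ⊆ {u ∈ U | B s u = 0} ∪ {u ∈ U | B s u = 1} := fun u hu =>
    (zero_or_one (B s u)).imp (And.intro hu) (And.intro hu)
  calc
    U.encard ≤ {u ∈ U | B s u = 0}.encard + {u ∈ U | B s u = 1}.encard :=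
      (Set.encard_le_encard two_fibers).trans (Set.encard_union_le _ _)
    _ ≤ _ := add_le_add (encard_fiber_le_encard_pairingClass hS hUS hU hs 0)
      (encard_fiber_le_encard_pairingClass hS hUS hU hs 1)

theorem encard_le_encard_pairingClass_add (hS : IsBalancedSumClosed B S) (hUS : U ⊆ S)
    (hU : ∀ u ∈ U, ∀ v ∈ U, B u v = 0) {s t : V} (hs : s ∈ S) (ht : t ∈ S) :
    U.encard ≤ (pairingClass B S U s).encard + (pairingClass B S U t).encard := by
  obtain hle | hle := le_total (pairingClass B S U s).encard (pairingClass B S U t).encard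
  · exact (encard_le_encard_pairingClass_add_self hS hUS hU hs).trans (by gcongr)
  · exact (encard_le_encard_pairingClass_add_self hS hUS hU ht).trans (by gcongr)

theorem encard_le_encard_nonorthogonal (hS : IsBalancedSumClosed B S) (hUS : U ⊆ S)
    (hU : ∀ u ∈ U, ∀ v ∈ U, B u v = 0) (hpair : ∀ u ∈ U, ∃ s ∈ S, B s u ≠ 0) :
    U.encard ≤ {s ∈ S | ∃ u ∈ U, B s u ≠ 0}.encard := by
  obtain rfl | ⟨u, hu⟩ := U.eq_empty_or_nonempty
  · simp
  obtain ⟨s, hs, hsu⟩ := hpair u hu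
  by_cases hone : ∀ v ∈ U, B s v = 1
  · calc
      U.encard = {v ∈ U | B s v = 1}.encard := by rw [Set.sep_eq_self_iff_mem_true.2 hone]
      _ ≤ (pairingClass B S U s).encard := encard_fiber_le_encard_pairingClass hS hUS hU hs 1
      _ ≤ _ := Set.encard_le_encard (pairingClass_subset_nonorthogonal B S hu hsu)
  · push Not at hone
    obtain ⟨v, hv, hsv⟩ := hone
    obtain ⟨t, ht, htv⟩ := hpair v hv
    have hst : B s v ≠ B t v := by
      rw [Fin.eq_one_of_ne_zero _ htv]
      exact hsv
    calc
      U.encard ≤ (pairingClass B S U s).encard + (pairingClass B S U t).encard :=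
        encard_le_encard_pairingClass_add hS hUS hU hs ht
      _ = (pairingClass B S U s ∪ pairingClass B S U t).encard :=
        (Set.encard_union_eq (disjoint_pairingClass B S hv hst)).symm
      _ ≤ _ := Set.encard_le_encard <| Set.union_subset
        (pairingClass_subset_nonorthogonal B S hu hsu)
        (pairingClass_subset_nonorthogonal B S hv htv)

end BinaryForm

section SingularVectors

open QuadraticMap

theorem add_add_notMem_of_index_eq_two {G : Type*} [AddGroup G] {H : AddSubgroup G}
    (hH : H.index = 2) {x y z : G} (hx : x ∉ H) (hy : y ∉ H) (hz : z ∉ H) :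
    x + (y + z) ∉ H := by
  simp [AddSubgroup.add_mem_iff_of_index_two hH, hx, hy, hz]

variable {R M : Type*} [CommRing R] [AddCommGroup M] [Module R M]

theorem isBalancedSumClosed_singular_sdiff [CharP R 2] (Q : QuadraticForm R M) {H : AddSubgroup M}
    (hH : H.index = 2) : IsBalancedSumClosed Q.polarBilin ({v | Q v = 0} \ H) := by
  rintro s u v ⟨hQs, hs⟩ ⟨hQu, hu⟩ ⟨hQv, hv⟩ huv hsuv
  refine ⟨?_, add_add_notMem_of_index_eq_two hH hs hu hv⟩
  rw [Set.mem_ofPred_eq] at hQs hQu hQv ⊢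
  rw [polarBilin_apply_apply] at huv
  rw [polarBilin_apply_apply, polarBilin_apply_apply] at hsuv
  calc
    Q (s + (u + v)) = polar Q s v + polar Q s v := by
      rw [QuadraticMap.map_add Q, QuadraticMap.map_add Q, polar_add_right, hQs, hQu, hQv, huv, hsuv]
      simp
    _ = 0 := CharTwo.add_self_eq_zero _

theorem exists_mem_polarBilin_ne_zero (Q : QuadraticForm R M) {S : Set M}
    (hspan : Submodule.span R S = ⊤) {u : M} (hu : Q.polarBilin u ≠ 0) :
    ∃ s ∈ S, Q.polarBilin s u ≠ 0 := by
  by_contra! horth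
  exact hu <| LinearMap.ext_on hspan fun s hs => (polar_comm Q u s).trans (horth s hs)

end SingularVectors

theorem ncard_le_ncard_sub_of_encard_add_le {α : Type*} {s t u : Set α} (hu : u.Finite)
    (h : s.encard + t.encard ≤ u.encard) : s.ncard ≤ u.ncard - t.ncard := by
  apply Nat.le_sub_of_add_le
  rw [← Nat.cast_le (α := ℕ∞), Nat.cast_add, hu.cast_ncard_eq]
  exact (add_le_add s.ncard_le_encard t.ncard_le_encard).trans h

theorem perp_inter_card_le_of_disjoint_radicalKer_general {V : Type*} [AddCommGroup V]
    [Module (ZMod 2) V] (Q : QuadraticForm (ZMod 2) V) {H : AddSubgroup V} (hH : H.index = 2)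
    {T : Set V} (hT : T ⊆ {v | Q v = 0} \ H)
    (hpair : ∀ u ∈ T, ∃ s ∈ {v | Q v = 0} \ (H : Set V), Q.polarBilin s u ≠ 0) :
    ({v | ∀ t ∈ T, Q.polarBilin v t = 0} ∩ T).encard + T.encard ≤
      ({v | Q v = 0} \ (H : Set V)).encard := by
  set S := {v | Q v = 0} \ (H : Set V)
  set U := {v | ∀ t ∈ T, Q.polarBilin v t = 0} ∩ T
  have nonorthogonal_subset : {s ∈ S | ∃ u ∈ U, Q.polarBilin s u ≠ 0} ⊆ S \ T := by
    rintro s ⟨hs, u, hu, hsu⟩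
    exact ⟨hs, fun hsT => hsu ((QuadraticMap.polar_comm Q s u).trans (hu.1 s hsT))⟩
  calc
    U.encard + T.encard ≤ {s ∈ S | ∃ u ∈ U, Q.polarBilin s u ≠ 0}.encard + T.encard :=
      add_le_add_left (encard_le_encard_nonorthogonal (isBalancedSumClosed_singular_sdiff Q hH)
        (fun u hu => hT hu.2) (fun u hu v hv => hu.1 v hv.2) fun u hu => hpair u hu.2) _
    _ ≤ (S \ T).encard + T.encard :=
      add_le_add_left (Set.encard_le_encard nonorthogonal_subset) _
    _ = S.encard := Set.encard_sdiff_add_encard_of_subset hT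

/-- Let `Q` be a quadratic form on `𝔽₂ⁿ`, `H` a subspace of index 2, and `S = (ker Q) ∖ H`
a spanning set.  Then for every subset `T ⊆ S` containing no element of the radical on which
`Q` vanishes, one has `|T^⊥ ∩ T| ≤ |S| − |T|`. -/
theorem perp_inter_card_le_of_disjoint_radicalKer {n : ℕ}
    (Q : QuadraticForm (ZMod 2) (Fin n → ZMod 2))
    (H : Submodule (ZMod 2) (Fin n → ZMod 2))
    (hH : Nat.card ((Fin n → ZMod 2) ⧸ H) = 2)
    (S : Set (Fin n → ZMod 2)) (hS : S = {v | Q v = 0} \ H)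
    (hspan : Submodule.span (ZMod 2) S = ⊤)
    (T : Set (Fin n → ZMod 2)) (hT : T ⊆ S)
    (hTrad : T ∩ {v ∈ (radical Q : Set (Fin n → ZMod 2)) | Q v = 0} = ∅) :
    (perpSet Q T ∩ T).ncard ≤ S.ncard - T.ncard := by
  subst hS
  have not_radical : ∀ u ∈ T, Q.polarBilin u ≠ 0 := fun u hu hrad =>
    Set.eq_empty_iff_forall_notMem.1 hTrad u ⟨hu, LinearMap.mem_ker.2 hrad, (hT hu).1⟩
  exact ncard_le_ncard_sub_of_encard_add_le (Set.toFinite _) <|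
    perp_inter_card_le_of_disjoint_radicalKer_general Q (H := H.toAddSubgroup) hH hT fun u hu =>
      exists_mem_polarBilin_ne_zero Q hspan (not_radical u hu)

end
end

section
/- Let Γ be a finite simple graph with edge set E(Γ). For an edge (u,v) ∈ E(Γ), say property P(u,v) holds if there exists a vertex w that is adjacent to both u and v, or adjacent to neither u nor v. Then P(u,v) is false for all edges (u,v) ∈ E(Γ) if and only if Γ is complete bipartite, i.e. its vertex set admits a partition V = V₁ ⊔ V₂ such that two vertices are adjacent if and only if they lie in different parts. -/
/-!
Property `P` fails on an edge `uv` exactly when the neighbourhoods of `u` and `v` are complementary.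
If this holds for every edge, the neighbourhood of any vertex `a` and its complement are the two
parts: an edge `uv` has exactly one endpoint adjacent to `a`, and if `a` is adjacent to `u` but not
to `v`, then `v` must be adjacent to the other endpoint `u` of the edge `au`. Conversely, in a
complete bipartite graph the neighbourhood of a vertex is the part opposite to its own.
-/

/-- A graph is complete bipartite: the vertex set admits a partition `V = V₁ ⊔ V₂` such that
two vertices are adjacent if and only if they lie in different parts. -/
def IsCompleteBipartite {V : Type} (Γ : SimpleGraph V) : Prop :=
  ∃ V₁ V₂ : Set V, V₁ ∪ V₂ = Set.univ ∧ V₁ ∩ V₂ = ∅ ∧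
    ∀ u v : V, Γ.Adj u v ↔ ((u ∈ V₁ ∧ v ∈ V₂) ∨ (u ∈ V₂ ∧ v ∈ V₁))

section NeighborSet

variable {V : Type*} {Γ : SimpleGraph V}

theorem neighborSet_eq_compl_iff_not_exists {u v : V} :
    Γ.neighborSet u = (Γ.neighborSet v)ᶜ ↔
      ¬ ∃ w : V, (Γ.Adj w u ∧ Γ.Adj w v) ∨ (¬ Γ.Adj w u ∧ ¬ Γ.Adj w v) := by
  simp only [Set.ext_iff, Set.mem_compl_iff, SimpleGraph.mem_neighborSet, Γ.adj_comm u,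
    Γ.adj_comm v, not_exists, ← iff_iff_and_or_not_and_not, ← xor_iff_iff_not,
    ← xor_iff_not_iff]

theorem adj_iff_xor_adj_of_neighborSet_eq_compl
    (hcompl : ∀ u v, Γ.Adj u v → Γ.neighborSet u = (Γ.neighborSet v)ᶜ) (a u v : V) :
    Γ.Adj u v ↔ Xor (Γ.Adj a u) (Γ.Adj a v) := by
  have adj_iff_not_adj {x y : V} (hxy : Γ.Adj x y) (w : V) : Γ.Adj x w ↔ ¬ Γ.Adj y w :=
    Set.ext_iff.mp (hcompl x y hxy) w
  constructor
  · intro huv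
    rw [xor_iff_iff_not, Γ.adj_comm a u, Γ.adj_comm a v]
    exact adj_iff_not_adj huv a
  · rintro (⟨hau, hav⟩ | ⟨hav, hau⟩)
    · exact (adj_iff_not_adj hau.symm v).mpr hav
    · exact ((adj_iff_not_adj hav.symm u).mpr hau).symm

theorem neighborSet_eq_compl_of_adj_iff_xor_mem {s : Set V}
    (hs : ∀ u v, Γ.Adj u v ↔ Xor (u ∈ s) (v ∈ s)) {u v : V} (huv : Γ.Adj u v) :
    Γ.neighborSet u = (Γ.neighborSet v)ᶜ := by
  ext w
  have mem_iff_notMem : u ∈ s ↔ v ∉ s := xor_iff_iff_not.mp ((hs u v).mp huv)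
  rw [Set.mem_compl_iff, SimpleGraph.mem_neighborSet, SimpleGraph.mem_neighborSet, hs, hs,
    mem_iff_notMem, xor_not_left, not_xor]

theorem forall_adj_neighborSet_eq_compl_iff_exists_adj_iff_xor_mem :
    (∀ u v, Γ.Adj u v → Γ.neighborSet u = (Γ.neighborSet v)ᶜ) ↔
      ∃ s : Set V, ∀ u v, Γ.Adj u v ↔ Xor (u ∈ s) (v ∈ s) := by
  constructor
  · intro hcompl
    rcases isEmpty_or_nonempty V with _ | ⟨⟨a⟩⟩
    · exact ⟨∅, isEmptyElim⟩
    · exact ⟨Γ.neighborSet a, adj_iff_xor_adj_of_neighborSet_eq_compl hcompl a⟩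
  · rintro ⟨s, hs⟩ u v huv
    exact neighborSet_eq_compl_of_adj_iff_xor_mem hs huv

end NeighborSet

theorem isCompleteBipartite_iff_exists_adj_iff_xor_mem {V : Type} {Γ : SimpleGraph V} :
    IsCompleteBipartite Γ ↔ ∃ s : Set V, ∀ u v, Γ.Adj u v ↔ Xor (u ∈ s) (v ∈ s) := by
  constructor
  · rintro ⟨V₁, V₂, hunion, hinter, hadj⟩
    obtain rfl : V₂ = V₁ᶜ := (IsCompl.of_eq hinter hunion).compl_eq.symm
    refine ⟨V₁, fun u v => ?_⟩
    rw [hadj, Xor, Set.mem_compl_iff, Set.mem_compl_iff, and_comm (a := u ∉ V₁)]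
  · rintro ⟨s, hs⟩
    refine ⟨s, sᶜ, Set.union_compl_self s, Set.inter_compl_self s, fun u v => ?_⟩
    rw [hs, Xor, Set.mem_compl_iff, Set.mem_compl_iff, and_comm (a := u ∉ s)]

theorem property_P_false_iff_completeBipartite_general {V : Type} (Γ : SimpleGraph V) :
    (∀ u v : V, Γ.Adj u v →
      ¬ ∃ w : V, (Γ.Adj w u ∧ Γ.Adj w v) ∨ (¬ Γ.Adj w u ∧ ¬ Γ.Adj w v)) ↔
    IsCompleteBipartite Γ := by
  simp only [← neighborSet_eq_compl_iff_not_exists]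
  rw [forall_adj_neighborSet_eq_compl_iff_exists_adj_iff_xor_mem,
    isCompleteBipartite_iff_exists_adj_iff_xor_mem]

/-- For an edge `(u,v)`, property `P(u,v)`: there is a vertex `w` adjacent to both `u` and `v`,
or adjacent to neither.  `P` fails for all edges iff the graph is complete bipartite. -/
theorem property_P_false_iff_completeBipartite {V : Type} [Fintype V] (Γ : SimpleGraph V) :
    (∀ u v : V, Γ.Adj u v →
      ¬ ∃ w : V, (Γ.Adj w u ∧ Γ.Adj w v) ∨ (¬ Γ.Adj w u ∧ ¬ Γ.Adj w v)) ↔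
    IsCompleteBipartite Γ :=
  property_P_false_iff_completeBipartite_general Γ
end
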